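/- Let G be a core graph, F a forest in G, and C a core subgraph of G such that C equals the core of F ∪ C. Then the image of F in the quotient graph G//C is a forest. -/

import Mathlib

open Classical

/-- A multigraph with edge set `E`: loops and multiple edges are allowed.
A subgraph is identified with the (nonempty) set of edges spanning it. -/
structure GraphOn (E : Type) : Type 1 where
  V : Type
  ends : E → Sym2 V

namespace GraphOn

variable {E : Type}

/-- One-step adjacency using only edges in `F`. -/
def Step (G : GraphOn E) (F : Finset E) (u v : G.V) : Prop :=
  ∃ e ∈ F, G.ends e = s(u, v)

/-- Connectivity of vertices within the subgraph spanned by `F`. -/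
def Reach (G : GraphOn E) (F : Finset E) (u v : G.V) : Prop :=
  Relation.ReflTransGen (G.Step F) u v

/-- `F` is a forest: every edge of `F` is a bridge (separating edge) of the
subgraph spanned by `F`. -/
def IsForest (G : GraphOn E) (F : Finset E) : Prop :=
  ∀ e ∈ F, ∀ u v : G.V, G.ends e = s(u, v) → ¬ G.Reach (F.erase e) u v

/-- `C` spans a core subgraph: a nonempty set of edges having no separating
edges (every edge has its endpoints joined in the complement of the edge). -/
def IsCoreSet (G : GraphOn E) (C : Finset E) : Prop :=
  C.Nonempty ∧ ∀ e ∈ C, ∀ u v : G.V, G.ends e = s(u, v) → G.Reach (C.erase e) u v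

/-- A core graph: no isolated vertices and no separating edges. -/
def IsCoreGraph [Fintype E] (G : GraphOn E) : Prop :=
  (∀ v : G.V, ∃ e : E, v ∈ G.ends e) ∧
    ∀ e : E, ∀ u v : G.V, G.ends e = s(u, v) → G.Reach (Finset.univ.erase e) u v

/-- The core of (the subgraph spanned by) `H`: the maximal core subgraph of `H`,
i.e. the union of all core subgraphs contained in `H` (empty if there is none). -/
noncomputable def coreOf (G : GraphOn E) (H : Finset E) : Finset E :=
  H.filter fun e => ∃ C : Finset E, C ⊆ H ∧ G.IsCoreSet C ∧ e ∈ C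

/-- The quotient graph `G // H`, obtained by collapsing each edge of `H` to a
point.  Its vertices are the components of `H` (together with the vertices not
meeting `H`), and its edges are the edges of `G` not in `H`. -/
def quot (G : GraphOn E) (H : Finset E) : GraphOn {e : E // e ∉ H} where
  V := Quot fun u v : G.V => ∃ e ∈ H, G.ends e = s(u, v)
  ends e := (G.ends e.val).map (Quot.mk _)

/-- The image in `G // H` of a set `F` of edges of `G`. -/
noncomputable def imageIn (H F : Finset E) : Finset {e : E // e ∉ H} :=
  F.subtype fun e => e ∉ H

/-- The subgraph of `G` spanned by the edge set `C`, as a graph in its own right. -/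
def restrict (G : GraphOn E) (C : Finset E) : GraphOn {e : E // e ∈ C} where
  V := G.V
  ends e := G.ends e.val

/-- The number of edges in a maximal (spanning) forest contained in `H`. -/
noncomputable def maxForestCard (G : GraphOn E) (H : Finset E) : ℕ :=
  (H.powerset.filter fun F => G.IsForest F).sup Finset.card

/-- The rank (first Betti number) of the subgraph spanned by `H`. -/
noncomputable def rankOf (G : GraphOn E) (H : Finset E) : ℕ :=
  H.card - G.maxForestCard H

/-- The jewel of a graph `G`, with truncation constants `c C` for each proper
core subgraph `C`: the polytope obtained from the simplex `σ(G)` by shaving the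
face opposite `σ(C)` by the amount `c C`. -/
noncomputable def jewelWith [Fintype E] (G : GraphOn E) (c : Finset E → ℝ) :
    Set (E → ℝ) :=
  {x | (∀ e, 0 ≤ x e) ∧ (∑ e, x e) = 1 ∧
    ∀ C : Finset E, G.IsCoreSet C → C ≠ Finset.univ → c C ≤ ∑ e ∈ C, x e}

/-- The jewel of a graph `G` with the standard truncation constants
`3 ^ (rank C - 1) * ε`, which strictly increase with the rank of `C`. -/
noncomputable def jewel [Fintype E] (G : GraphOn E) (ε : ℝ) : Set (E → ℝ) :=
  G.jewelWith fun C => 3 ^ (G.rankOf C - 1) * ε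

/-- The border facet of the jewel opposite the face `σ(C)`, for `C` a proper
core subgraph. -/
noncomputable def borderFacet [Fintype E] (G : GraphOn E) (ε : ℝ) (C : Finset E) :
    Set (E → ℝ) :=
  {x | x ∈ G.jewel ε ∧ ∑ e ∈ C, x e = 3 ^ (G.rankOf C - 1) * ε}

end GraphOn

/-- An abstract framework for the family of manifolds `M_{n,s}` (connected sums
of `n` copies of `S¹ × S²` with `s` open balls removed) and their disjoint
unions, together with (isotopy classes of) nontrivial embedded 2-spheres,
sphere systems, and the operation of cutting along a system. -/
structure SphereWorld where
  /-- the collection of manifolds under consideration -/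
  M : Type
  /-- `Mns n s` is the manifold `M_{n,s}` -/
  Mns : ℕ → ℕ → M
  /-- isotopy classes of nontrivial embedded 2-spheres in `m` -/
  Sphere : M → Type
  /-- `IsSystem m S`: the spheres of `S` admit pairwise disjoint representatives -/
  IsSystem : ∀ m : M, Finset (Sphere m) → Prop
  /-- `cut m S` is the manifold `m − S` obtained by cutting `m` open along `S` -/
  cut : ∀ m : M, Finset (Sphere m) → M
  /-- the multiset of connected components of `m` -/
  pieces : M → Multiset M
  /-- every connected component of `m` is simply connected -/
  AllPiecesSimplyConnected : M → Prop
  /-- `Separating m s`: the sphere `s` separates `m` -/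
  Separating : ∀ m : M, Sphere m → Prop
  /-- the sphere of `m − T` induced by a sphere of `m` (disjoint from `T`) -/
  pushSphere : ∀ (m : M) (T : Finset (Sphere m)), Sphere m → Sphere (cut m T)
  /-- the graph dual to a sphere system `S` in `m`: one vertex for each
  component of `m − S` and one edge for each sphere of `S` -/
  dualGraph : ∀ (m : M) (S : Finset (Sphere m)), GraphOn {x : Sphere m // x ∈ S}

namespace SphereWorld

variable (W : SphereWorld)

/-- The number of connected components. -/
def numComponents (m : W.M) : ℕ := (W.pieces m).card

/-- `h(S)`: the number of spheres of `S` minus the number of components of `m − S`. -/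
def hh (m : W.M) (S : Finset (W.Sphere m)) : ℤ :=
  (S.card : ℤ) - (W.numComponents (W.cut m S) : ℤ)

/-- A core sphere system: one containing no separating spheres. -/
def IsCore (m : W.M) (S : Finset (W.Sphere m)) : Prop :=
  W.IsSystem m S ∧ ∀ s ∈ S, ¬ W.Separating m s

/-- A complete sphere system: every component of `m − S` is simply connected. -/
def IsComplete (m : W.M) (S : Finset (W.Sphere m)) : Prop :=
  W.IsSystem m S ∧ W.AllPiecesSimplyConnected (W.cut m S)

/-- The image in `m − T` of a set `S` of spheres of `m`. -/
noncomputable def push (m : W.M) (T S : Finset (W.Sphere m)) :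
    Finset (W.Sphere (W.cut m T)) :=
  S.image (W.pushSphere m T)

/-- `T` is a core complement in `S`: `T ⊂ S` and `S − T` is core in `m − T`. -/
def IsCoreComplement (m : W.M) (S T : Finset (W.Sphere m)) : Prop :=
  T ⊂ S ∧ W.IsCore (W.cut m T) (W.push m T (S \ T))

/-- The truncation constant `t(S,T) = 3 ^ (h(S) − h(T)) / N`. -/
noncomputable def tconst (N : ℕ) (m : W.M) (S T : Finset (W.Sphere m)) : ℝ :=
  (3 : ℝ) ^ (W.hh m S - W.hh m T) / (N : ℝ)

/-- The closed simplex `σ(S)` spanned by a sphere system `S`, realized as the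
weight functions supported on `S`, with nonnegative weights summing to `1`. -/
def simplexSet (m : W.M) (S : Finset (W.Sphere m)) : Set (W.Sphere m → ℝ) :=
  {x | (∀ s, 0 ≤ x s) ∧ (∀ s ∉ S, x s = 0) ∧ ∑ s ∈ S, x s = 1}

/-- The open simplex spanned by a sphere system `S`. -/
def openSimplex (m : W.M) (S : Finset (W.Sphere m)) : Set (W.Sphere m → ℝ) :=
  {x | (∀ s ∈ S, 0 < x s) ∧ (∀ s ∉ S, x s = 0) ∧ ∑ s ∈ S, x s = 1}

/-- The jewel `J_m(S) ⊆ σ(S)` (with parameter `N`): the polytope obtained from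
`σ(S)` by truncating the face `σ(T)` by the amount `t(S,T)`, for every
(nonempty) core complement `T ⊂ S`. -/
noncomputable def jewelSet (N : ℕ) (m : W.M) (S : Finset (W.Sphere m)) :
    Set (W.Sphere m → ℝ) :=
  {x | x ∈ W.simplexSet m S ∧
    ∀ T : Finset (W.Sphere m), T.Nonempty → W.IsCoreComplement m S T →
      W.tconst N m S T ≤ ∑ s ∈ S \ T, x s}

/-- The interior of the jewel `J_m(S)`. -/
noncomputable def jewelInterior (N : ℕ) (m : W.M) (S : Finset (W.Sphere m)) :
    Set (W.Sphere m → ℝ) :=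
  {x | x ∈ W.openSimplex m S ∧
    ∀ T : Finset (W.Sphere m), T.Nonempty → W.IsCoreComplement m S T →
      W.tconst N m S T < ∑ s ∈ S \ T, x s}

/-- The facet `φ(S,T)` of the jewel `J_m(S)` created by truncating `σ(T)`. -/
noncomputable def facetSet (N : ℕ) (m : W.M) (S T : Finset (W.Sphere m)) :
    Set (W.Sphere m → ℝ) :=
  {x | x ∈ W.jewelSet N m S ∧ ∑ s ∈ S \ T, x s = W.tconst N m S T}

/-- Jewel space `𝒥(m)`: the union of the jewels of all complete core sphere
systems in `m` (glued along their common faces). -/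
noncomputable def jewelSpace (N : ℕ) (m : W.M) : Set (W.Sphere m → ℝ) :=
  {x | ∃ S : Finset (W.Sphere m),
    W.IsComplete m S ∧ W.IsCore m S ∧ x ∈ W.jewelSet N m S}

/-- The wall `W(T)`: the union of the facets `φ(S,T)` over all complete core
systems `S` containing `T` as a core complement. -/
noncomputable def wall (N : ℕ) (m : W.M) (T : Finset (W.Sphere m)) :
    Set (W.Sphere m → ℝ) :=
  {x | ∃ S : Finset (W.Sphere m), W.IsComplete m S ∧ W.IsCore m S ∧
    W.IsCoreComplement m S T ∧ x ∈ W.facetSet N m S T}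

/-- The boundary `∂𝒥(m)` of jewel space: the union of all the facets `φ(S,T)`
over complete core systems `S` and core complements `T ⊂ S`. -/
noncomputable def jewelBoundary (N : ℕ) (m : W.M) : Set (W.Sphere m → ℝ) :=
  {x | ∃ S T : Finset (W.Sphere m), W.IsComplete m S ∧ W.IsCore m S ∧
    T.Nonempty ∧ W.IsCoreComplement m S T ∧ x ∈ W.facetSet N m S T}

/-- The sphere complex `SC(m)`, realized as the union of the closed simplices
`σ(S)` over all sphere systems `S` in `m`. -/
def sphereComplex (m : W.M) : Set (W.Sphere m → ℝ) :=
  {x | ∃ S : Finset (W.Sphere m), W.IsSystem m S ∧ x ∈ W.simplexSet m S}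

/-- The subcomplex `SC_∞(m)` spanned by the incomplete core sphere systems. -/
def scInfty (m : W.M) : Set (W.Sphere m → ℝ) :=
  {x | ∃ S : Finset (W.Sphere m),
    W.IsCore m S ∧ ¬ W.IsComplete m S ∧ x ∈ W.simplexSet m S}

/-- The `d`-skeleton of the sphere complex: the union of the simplices `σ(S)`
with `S.card ≤ d + 1`. -/
def skeleton (m : W.M) (d : ℕ) : Set (W.Sphere m → ℝ) :=
  {x | ∃ S : Finset (W.Sphere m),
    W.IsSystem m S ∧ S.card ≤ d + 1 ∧ x ∈ W.simplexSet m S}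

/-- The jewel `J(S)` of a sphere system, in coordinates indexed by the spheres
of `S` (so that it lives in the same Euclidean space as the jewel of the dual
graph of `S`). -/
noncomputable def jewelCoords (N : ℕ) (m : W.M) (S : Finset (W.Sphere m)) :
    Set ({x : W.Sphere m // x ∈ S} → ℝ) :=
  {x | (∀ e, 0 ≤ x e) ∧ (∑ e, x e) = 1 ∧
    ∀ T : Finset (W.Sphere m), T.Nonempty → W.IsCoreComplement m S T →
      W.tconst N m S T ≤
        ∑ e ∈ Finset.univ.filter
          (fun e : {x : W.Sphere m // x ∈ S} => (e : W.Sphere m) ∈ S \ T), x e}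

end SphereWorld

/-- The (geometric) join of a finite family of subsets `A i` of the spaces
`κ i → ℝ`: formal convex combinations `∑ tᵢ aᵢ` with `aᵢ ∈ A i`, realized
inside `(Σ i, κ i) → ℝ`. -/
def geomJoin {k : ℕ} {κ : Fin k → Type} (A : ∀ i, Set (κ i → ℝ)) :
    Set ((Σ i, κ i) → ℝ) :=
  {x | ∃ (t : Fin k → ℝ) (a : ∀ i, κ i → ℝ), (∀ i, 0 ≤ t i) ∧ (∑ i, t i) = 1 ∧
    (∀ i, t i ≠ 0 → a i ∈ A i) ∧ ∀ p : Σ i, κ i, x p = t p.1 * a p.1 p.2}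

/-! Every non-separating edge of a subgraph `H` lies in the core of `H`: deleting another edge that
is separating keeps it non-separating, so once none is left a core subgraph remains. Walks in
the image of `F` in `G // C` lift to walks in `F ∪ C`, hence an edge of `F` outside `C` whose image
does not separate the image of `F` does not separate `F ∪ C` either, and so would lie in the core
of `F ∪ C`, which is contained in `C`. -/

namespace GraphOn

section Reachability

variable {E : Type} {G : GraphOn E} {D H : Finset E} {u v x y : G.V}

instance (G : GraphOn E) (H : Finset E) : Std.Symm (G.Step H) where
  symm _ _ := fun ⟨e, he, h⟩ => ⟨e, he, h.trans Sym2.eq_swap⟩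

theorem Reach.symm (h : G.Reach H u v) : G.Reach H v u :=
  symm_of (Relation.ReflTransGen (G.Step H)) h

theorem Reach.mono (hDH : D ⊆ H) (h : G.Reach D u v) : G.Reach H u v :=
  Relation.ReflTransGen.mono (fun _ _ ⟨e, he, hends⟩ => ⟨e, hDH he, hends⟩) _ _ h

theorem Reach.of_sym2_eq (huv : s(u, v) = s(x, y)) (h : G.Reach H u v) : G.Reach H x y := by
  obtain ⟨rfl, rfl⟩ | ⟨rfl, rfl⟩ := Sym2.eq_iff.1 huv
  exacts [h, h.symm]

theorem reach_of_mem {e : E} (he : e ∈ H) (huv : G.ends e = s(u, v)) : G.Reach H u v :=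
  .single ⟨e, he, huv⟩

theorem Reach.erase_or_exists_ends (f : E) (h : G.Reach H u v) :
    G.Reach (H.erase f) u v ∨
      ∃ x y, G.ends f = s(x, y) ∧ G.Reach (H.erase f) u x ∧ G.Reach (H.erase f) y v := by
  induction h with
  | refl => exact .inl .refl
  | @tail b c _ hbc ih =>
    obtain ⟨g, hg, hends⟩ := hbc
    by_cases hgf : g = f
    · subst hgf
      obtain hub | ⟨x, y, hxy, hux, -⟩ := ih
      · exact .inr ⟨b, c, hends, hub, .refl⟩
      · obtain ⟨rfl, rfl⟩ | ⟨rfl, rfl⟩ := Sym2.eq_iff.1 (hends.symm.trans hxy)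
        · exact .inr ⟨b, c, hends, hux, .refl⟩
        · exact .inl hux
    · have hbc : G.Reach (H.erase f) b c := reach_of_mem (Finset.mem_erase.2 ⟨hgf, hg⟩) hends
      obtain hub | ⟨x, y, hxy, hux, hyb⟩ := ih
      · exact .inl (hub.trans hbc)
      · exact .inr ⟨x, y, hxy, hux, hyb.trans hbc⟩

end Reachability

section Core

variable {E : Type} {G : GraphOn E} {H : Finset E} {e f : E} {u v x y : G.V}

theorem Reach.erase_erase_of_not_reach_erase (he : e ∈ H) (hef : e ≠ f)
    (huv : G.ends e = s(u, v)) (hxy : G.ends f = s(x, y))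
    (h : G.Reach (H.erase e) u v) (hf : ¬ G.Reach (H.erase f) x y) :
    G.Reach ((H.erase f).erase e) u v := by
  rw [Finset.erase_right_comm]
  refine (h.erase_or_exists_ends f).resolve_right ?_
  rintro ⟨x', y', hxy', hux', hyv'⟩
  have hsub : (H.erase e).erase f ⊆ H.erase f :=
    Finset.erase_subset_erase f (Finset.erase_subset e H)
  have huv' : G.Reach (H.erase f) u v := reach_of_mem (Finset.mem_erase.2 ⟨hef, he⟩) huv
  have hx'y' : G.Reach (H.erase f) x' y' :=
    (hux'.mono hsub).symm.trans (huv'.trans (hyv'.mono hsub).symm)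
  exact hf (hx'y'.of_sym2_eq (hxy'.symm.trans hxy))

theorem exists_isCoreSet_of_reach_erase (he : e ∈ H) (huv : G.ends e = s(u, v))
    (h : G.Reach (H.erase e) u v) : ∃ D ⊆ H, G.IsCoreSet D ∧ e ∈ D := by
  obtain ⟨D, hDH, hD⟩ := exists_minimal_le_of_wellFoundedLT
    (fun D : Finset E => e ∈ D ∧ G.Reach (D.erase e) u v) H ⟨he, h⟩
  obtain ⟨heD, hreach⟩ := hD.prop
  refine ⟨D, hDH, ⟨⟨e, heD⟩, fun f hf x y hxy => ?_⟩, heD⟩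
  obtain rfl | hef := eq_or_ne e f
  · exact hreach.of_sym2_eq (huv.symm.trans hxy)
  · by_contra hfsep
    exact hD.not_prop_of_lt (Finset.erase_ssubset hf) ⟨Finset.mem_erase.2 ⟨hef, heD⟩,
      hreach.erase_erase_of_not_reach_erase heD hef huv hxy hfsep⟩

theorem mem_coreOf_of_reach_erase (he : e ∈ H) (huv : G.ends e = s(u, v))
    (h : G.Reach (H.erase e) u v) : e ∈ G.coreOf H :=
  Finset.mem_filter.2 ⟨he, exists_isCoreSet_of_reach_erase he huv h⟩

end Core

section Quotient

variable {E : Type} {G : GraphOn E} {C H : Finset E}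

theorem quot_mk_eq_iff {u v : G.V} :
    (Quot.mk _ u : (G.quot H).V) = Quot.mk _ v ↔ G.Reach H u v := by
  change Quot.mk (G.Step H) u = Quot.mk (G.Step H) v ↔ Relation.ReflTransGen (G.Step H) u v
  rw [Quot.eq, Relation.EqvGen.eqvGen_eq_reflTransGen]

theorem quot_ends_eq {e : {e : E // e ∉ H}} {u v : G.V} (huv : G.ends e.1 = s(u, v)) :
    (G.quot H).ends e = s(Quot.mk _ u, Quot.mk _ v) :=
  congrArg (Sym2.map (Quot.mk _)) huv

/-- The map on vertices of the canonical collapse `G // C → G // H`, for `C ⊆ H`. -/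
def quotMap (G : GraphOn E) (hCH : C ⊆ H) : (G.quot C).V → (G.quot H).V :=
  Quot.factor _ _ fun _ _ ⟨e, he, h⟩ => ⟨e, hCH he, h⟩

theorem Reach.quotMap_eq {K : Finset {e : E // e ∉ C}} (hCH : C ⊆ H) (hKH : ∀ k ∈ K, k.1 ∈ H)
    {p q : (G.quot C).V} (h : (G.quot C).Reach K p q) : G.quotMap hCH p = G.quotMap hCH q := by
  induction h with
  | refl => rfl
  | @tail q r _ hqr ih =>
    obtain ⟨k, hk, hends⟩ := hqr
    refine ih.trans ?_
    obtain ⟨x, y, hxy⟩ := Sym2.exists.1 ⟨G.ends k.1, rfl⟩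
    have hmk : (Quot.mk _ x : (G.quot H).V) = Quot.mk _ y :=
      quot_mk_eq_iff.2 (reach_of_mem (hKH k hk) hxy)
    obtain ⟨rfl, rfl⟩ | ⟨rfl, rfl⟩ := Sym2.eq_iff.1 (hends.symm.trans (quot_ends_eq hxy))
    exacts [hmk, hmk.symm]

theorem reach_of_reach_quot {K : Finset {e : E // e ∉ C}} (hCH : C ⊆ H) (hKH : ∀ k ∈ K, k.1 ∈ H)
    {u v : G.V} (h : (G.quot C).Reach K (Quot.mk _ u) (Quot.mk _ v)) : G.Reach H u v :=
  quot_mk_eq_iff.1 (h.quotMap_eq hCH hKH)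

theorem reach_erase_of_reach_erase_imageIn {F : Finset E} {e : {e : E // e ∉ C}} {u v : G.V}
    (h : (G.quot C).Reach ((imageIn C F).erase e) (Quot.mk _ u) (Quot.mk _ v)) :
    G.Reach ((F ∪ C).erase e) u v := by
  refine reach_of_reach_quot (fun c hc => ?_) (fun k hk => ?_) h
  · exact Finset.mem_erase.2 ⟨fun hce => e.2 (hce ▸ hc), Finset.mem_union_right F hc⟩
  · obtain ⟨hke, hkF⟩ := Finset.mem_erase.1 hk
    exact Finset.mem_erase.2
      ⟨Subtype.coe_ne_coe.2 hke, Finset.mem_union_left C (Finset.mem_subtype.1 hkF)⟩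

end Quotient

end GraphOn

theorem forest_image_in_quotient_general {E : Type} (G : GraphOn E) (F C : Finset E)
    (hcore : G.coreOf (F ∪ C) ⊆ C) : (G.quot C).IsForest (GraphOn.imageIn C F) := by
  intro e he p q hpq hreach
  obtain ⟨u, v, huv⟩ := Sym2.exists.1 ⟨G.ends e.1, rfl⟩
  -- `IsForest` erases edges by classical equality, not by the equality of the subtype.
  have hpq_reach : (G.quot C).Reach ((GraphOn.imageIn C F).erase e) p q := by convert hreach
  have huv_reach : G.Reach ((F ∪ C).erase e) u v :=
    GraphOn.reach_erase_of_reach_erase_imageIn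
      (hpq_reach.of_sym2_eq (hpq.symm.trans (GraphOn.quot_ends_eq huv)))
  have heFC : e.1 ∈ F ∪ C := Finset.mem_union_left C (Finset.mem_subtype.1 he)
  exact e.2 (hcore (GraphOn.mem_coreOf_of_reach_erase heFC huv huv_reach))

/-- Let `G` be a core graph, `F` a forest in `G`, and `C` a
core subgraph of `G` such that `C` equals the core of `F ∪ C`.  Then the image
of `F` in the quotient graph `G // C` is a forest. -/
theorem forest_image_in_quotient {E : Type} [Fintype E] (G : GraphOn E)
    (hG : G.IsCoreGraph) (F C : Finset E) (hF : G.IsForest F)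
    (hC : G.IsCoreSet C) (hcore : C = G.coreOf (F ∪ C)) :
    (G.quot C).IsForest (GraphOn.imageIn C F) :=
  forest_image_in_quotient_general G F C hcore.symm.subset
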